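/- arXiv:2410.21957 — 2 statements merged into one kernel-verified Lean document; each statement's English description precedes it below -/
import Mathlib

section
/- Let n ≥ 1. Assume a transform 𝒯 : GX → GX satisfies: (1) 𝒯(𝒯(Φ)) = Φ for every Φ ∈ GX; (2) for every Φ ∈ GX, 𝒯(Φ) = Φ if Φ ∈ GY and 𝒯(Φ) ≠ Φ if Φ ∉ GY; and (3) there exists a real-analytic map F : ℝ^{2n+1} → ℝ^{2n+1} such that 𝒯(Φ) = F ∘ Φ for every Φ ∈ GX. Then 𝒯 is the Legendre involution, i.e. 𝒯(θ, a, b) = (b, Σᵢ₌₁ⁿ bᵢθᵢ − a, θ) for every (θ, a, b) ∈ GX. -/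
open scoped BigOperators

/-- Triples `(θ, a, b)` encoding maps `ℝⁿ → ℝ^{2n+1}`. -/
abbrev TripleMap (n : ℕ) :=
  ((Fin n → ℝ) → Fin n → ℝ) × ((Fin n → ℝ) → ℝ) × ((Fin n → ℝ) → Fin n → ℝ)

/-- All three components are `C^∞`. -/
def SmoothTriple (n : ℕ) (Φ : TripleMap n) : Prop :=
  ContDiff ℝ (⊤ : ℕ∞) Φ.1 ∧ ContDiff ℝ (⊤ : ℕ∞) Φ.2.1 ∧ ContDiff ℝ (⊤ : ℕ∞) Φ.2.2

/-- The creative condition (*): `da = ∑ᵢ bᵢ dθᵢ`. -/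
def Creative (n : ℕ) (Φ : TripleMap n) : Prop :=
  ∀ x v : Fin n → ℝ,
    fderiv ℝ Φ.2.1 x v = ∑ i, Φ.2.2 x i * fderiv ℝ (fun y => Φ.1 y i) x v

/-- `RegPts f` is the set of regular points of `f : ℝⁿ → ℝⁿ`, i.e. points where
the differential is invertible. -/
def RegPts (n : ℕ) (f : (Fin n → ℝ) → Fin n → ℝ) : Set (Fin n → ℝ) :=
  {x | Function.Bijective (fderiv ℝ f x)}

/-- `X`: smooth triples satisfying the creative condition. -/
def Xset (n : ℕ) : Set (TripleMap n) := {Φ | SmoothTriple n Φ ∧ Creative n Φ}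

/-- `GX`: elements of `X` such that `Reg θ` and `Reg b` are dense. -/
def GXset (n : ℕ) : Set (TripleMap n) :=
  {Φ | SmoothTriple n Φ ∧ Creative n Φ ∧ Dense (RegPts n Φ.1) ∧ Dense (RegPts n Φ.2.2)}

/-- `Y`: triples of the form `(θ, ½∑θᵢ², θ)` with `θ` smooth. -/
def Yset (n : ℕ) : Set (TripleMap n) :=
  {Φ | ∃ θ : (Fin n → ℝ) → Fin n → ℝ, ContDiff ℝ (⊤ : ℕ∞) θ ∧
    Φ = (θ, fun x => (1 / 2) * ∑ i, θ x i ^ 2, θ)}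

/-- `GY`: triples of the form `(θ, ½∑θᵢ², θ)` with `θ` smooth and `Reg θ` dense. -/
def GYset (n : ℕ) : Set (TripleMap n) :=
  {Φ | ∃ θ : (Fin n → ℝ) → Fin n → ℝ, ContDiff ℝ (⊤ : ℕ∞) θ ∧ Dense (RegPts n θ) ∧
    Φ = (θ, fun x => (1 / 2) * ∑ i, θ x i ^ 2, θ)}

/-- The Legendre involution `L(θ, a, b) = (b, ∑ᵢ bᵢθᵢ − a, θ)`. -/
def Legendre (n : ℕ) (Φ : TripleMap n) : TripleMap n :=
  (Φ.2.2, fun x => (∑ i, Φ.2.2 x i * Φ.1 x i) - Φ.2.1 x, Φ.1)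

/-- Packing a triple `(θ, a, b)` into a single map `ℝⁿ → ℝ^{2n+1}`
(realized as `ℝⁿ × ℝ × ℝⁿ`). -/
def packTriple (n : ℕ) (Φ : TripleMap n) : (Fin n → ℝ) → (Fin n → ℝ) × ℝ × (Fin n → ℝ) :=
  fun x => (Φ.1 x, Φ.2.1 x, Φ.2.2 x)

/-!
Since `F` maps Legendrian maps to Legendrian maps, it preserves the contact planes, and on them its
differential is conformally symplectic. As `F` is its own inverse and regular points are dense, it
cannot map a Lagrangian plane with a singular projection to one with two regular projections. At the
origin, where `F` fixes the tangent plane of the paraboloid `a = |θ|² / 2`, `b = θ`, this leaves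
only the identity and the swap of `θ` and `b`. The identity integrates to `F = id`. In the other
case the block of the differential from `b` to `b` vanishes near the origin, hence everywhere by
analyticity, so `F` exchanges the foliations by the Legendrian leaves `(θ, a) = const` and
`b = const`. Each paraboloid jet is fixed, so `F p` is determined by the tangent planes of the
paraboloid along the hyperplane of slope `b` through `p`.
-/

open Matrix

section LinearAlgebra

variable {ι : Type*} [Fintype ι] [DecidableEq ι]

theorem exists_diagonalizing_algHom {X : Matrix ι ι ℝ} (hX : X.IsSymm) :
    ∃ (C : (ι → ℝ) →ₐ[ℝ] Matrix ι ι ℝ) (d : ι → ℝ), C d = X ∧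
      (∀ e, (C e).IsSymm) ∧ ∀ e, (C e).det = ∏ i, e i := by
  have hH : X.IsHermitian := isHermitian_iff_isSymm.2 hX
  let U := hH.eigenvectorUnitary
  refine ⟨(Unitary.conjStarAlgAut ℝ (Matrix ι ι ℝ) U).toAlgEquiv.toAlgHom.comp
    (diagonalAlgHom ℝ), hH.eigenvalues, hH.spectral_theorem.symm, fun e => ?_, fun e => ?_⟩
  · have h : IsSelfAdjoint (diagonal e) := isHermitian_diagonal e
    exact isHermitian_iff_isSymm.1 (h.map (Unitary.conjStarAlgAut ℝ (Matrix ι ι ℝ) U))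
  · have hU : (star (U : Matrix ι ι ℝ)).det * (U : Matrix ι ι ℝ).det = 1 := by
      rw [← det_mul, Unitary.coe_star_mul_self, det_one]
    change ((U : Matrix ι ι ℝ) * diagonal e * star (U : Matrix ι ι ℝ)).det = _
    rw [det_mul, det_mul, det_diagonal]
    linear_combination (∏ i, e i) * hU

theorem eq_zero_of_forall_det_add_eq_zero {K : Matrix ι ι ℝ} (hK : K.IsSymm)
    (h : ∀ R : Matrix ι ι ℝ, R.IsSymm → R.det = 0 → (R + K).det = 0) : K = 0 := by
  obtain ⟨C, d, rfl, hsymm, hdet⟩ := exists_diagonalizing_algHom hK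
  suffices d = 0 by rw [this, map_zero]
  funext i
  have hR := h (C (Function.update (1 - d) i 0)) (hsymm _) (by
    rw [hdet]; exact Finset.prod_eq_zero (Finset.mem_univ i) (by simp))
  rw [← map_add, hdet, Finset.prod_eq_zero_iff] at hR
  obtain ⟨j, -, hj⟩ := hR
  rcases eq_or_ne j i with rfl | hji
  · simpa using hj
  · simp [hji] at hj

section CommRing

variable {R : Type*} [CommRing R]

/-- The columns of `S` span a subspace on which the standard symplectic form `J` vanishes. -/
def IsIsotropic (S : Matrix (ι ⊕ ι) ι R) : Prop := Sᵀ * J ι R * S = 0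

/-- The span of the columns of `S` projects isomorphically to both factors of `Rⁿ × Rⁿ`
(when `R` is a field). -/
def IsTransverse (S : Matrix (ι ⊕ ι) ι R) : Prop := S.toRows₁.det ≠ 0 ∧ S.toRows₂.det ≠ 0

/-- If `M` maps an isotropic frame to a transverse one, then the frame was transverse itself. -/
def ReflectsTransverse (M : Matrix (ι ⊕ ι) (ι ⊕ ι) R) : Prop :=
  ∀ S : Matrix (ι ⊕ ι) ι R, IsIsotropic S → IsTransverse (M * S) → IsTransverse S

theorem isIsotropic_fromRows_iff {P Q : Matrix ι ι R} :
    IsIsotropic (fromRows P Q) ↔ Qᵀ * P = Pᵀ * Q := by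
  rw [IsIsotropic, J, transpose_fromRows, fromCols_mul_fromBlocks, fromCols_mul_fromRows]
  simp [← sub_eq_add_neg, sub_eq_zero]

theorem ReflectsTransverse.det_mul_det_eq_zero [IsDomain R] {A B C D : Matrix ι ι R}
    (h : ReflectsTransverse (fromBlocks A B C D)) {P Q : Matrix ι ι R} (hPQ : Qᵀ * P = Pᵀ * Q)
    (hdet : P.det = 0 ∨ Q.det = 0) : (A * P + B * Q).det * (C * P + D * Q).det = 0 := by
  by_contra hne
  have hS := h (fromRows P Q) (isIsotropic_fromRows_iff.2 hPQ) (by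
    simpa [IsTransverse, fromBlocks_mul_fromRows] using hne)
  simp only [IsTransverse, toRows₁_fromRows, toRows₂_fromRows] at hS
  exact hdet.elim hS.1 hS.2

theorem transpose_fromBlocks_mul_J_mul (A B C D : Matrix ι ι R) :
    (fromBlocks A B C D)ᵀ * J ι R * fromBlocks A B C D =
      fromBlocks (Cᵀ * A - Aᵀ * C) (Cᵀ * B - Aᵀ * D) (Dᵀ * A - Bᵀ * C) (Dᵀ * B - Bᵀ * D) := by
  simp [J, fromBlocks_transpose, fromBlocks_multiply, ← sub_eq_add_neg]

theorem dotProduct_J_mulVec (x y : ι ⊕ ι → R) :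
    x ⬝ᵥ (J ι R *ᵥ y) = (x ∘ Sum.inr) ⬝ᵥ (y ∘ Sum.inl) - (y ∘ Sum.inr) ⬝ᵥ (x ∘ Sum.inl) := by
  rw [dotProduct_comm (y ∘ Sum.inr)]
  simp [J, fromBlocks_mulVec, dotProduct, neg_mulVec, neg_add_eq_sub]

theorem IsIsotropic.dotProduct_toRows_mulVec_comm {S : Matrix (ι ⊕ ι) ι R} (hS : IsIsotropic S)
    (v w : ι → R) : S.toRows₂ *ᵥ v ⬝ᵥ S.toRows₁ *ᵥ w = S.toRows₂ *ᵥ w ⬝ᵥ S.toRows₁ *ᵥ v := by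
  have h : (S *ᵥ v) ⬝ᵥ (J ι R *ᵥ (S *ᵥ w)) = 0 := by
    rw [← vecMul_transpose, ← dotProduct_mulVec, mulVec_mulVec, mulVec_mulVec, hS]
    simp
  rw [dotProduct_J_mulVec] at h
  exact sub_eq_zero.1 h

end CommRing

theorem mul_J_mul_transpose_of_transpose_mul_J_mul {K : Type*} [Field K]
    {M : Matrix (ι ⊕ ι) (ι ⊕ ι) K} {ρ : K} (hρ : ρ ≠ 0) (hM : Mᵀ * J ι K * M = ρ • J ι K) :
    M * J ι K * Mᵀ = ρ • J ι K := by
  have hleft : (-ρ⁻¹ • (J ι K * Mᵀ * J ι K)) * M = 1 := by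
    calc (-ρ⁻¹ • (J ι K * Mᵀ * J ι K)) * M = -ρ⁻¹ • (J ι K * (Mᵀ * J ι K * M)) := by
          simp only [smul_mul_assoc, Matrix.mul_assoc]
      _ = 1 := by simp [hM, J_squared, hρ]
  have hright : ρ⁻¹ • (M * J ι K * Mᵀ * J ι K) = -1 := by
    rw [← mul_eq_one_comm.1 hleft]
    simp [Matrix.mul_assoc]
  calc M * J ι K * Mᵀ = -(ρ • (ρ⁻¹ • (M * J ι K * Mᵀ * J ι K))) * J ι K := by
        simp [hρ, Matrix.mul_assoc, J_squared]
    _ = ρ • J ι K := by simp [hright]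

theorem mul_J_mul_transpose_fromBlocks {R : Type*} [CommRing R] (A B C D : Matrix ι ι R) :
    fromBlocks A B C D * J ι R * (fromBlocks A B C D)ᵀ =
      fromBlocks (B * Aᵀ - A * Bᵀ) (B * Cᵀ - A * Dᵀ) (D * Aᵀ - C * Bᵀ) (D * Cᵀ - C * Dᵀ) := by
  simp [J, fromBlocks_transpose, fromBlocks_multiply, ← sub_eq_add_neg]

theorem det_add_eq_zero_of_forall_det_mul_det_eq_zero {K : Type*} [Field K] [Infinite K]
    {A B C D : Matrix ι ι K} (hB : B.det ≠ 0)
    (h : ∀ t : K, (t • A + B).det * (t • C + D).det = 0) : (C + D).det = 0 := by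
  let pencil (M N : Matrix ι ι K) : Polynomial K :=
    ((Polynomial.X : Polynomial K) • M.map Polynomial.C + N.map Polynomial.C).det
  have eval_pencil (M N : Matrix ι ι K) (t : K) : (pencil M N).eval t = (t • M + N).det := by
    rw [← Polynomial.coe_evalRingHom, RingHom.map_det]
    congr 1
    ext i j
    simpa using mul_comm (M i j) t
  have hmul : pencil A B * pencil C D = 0 :=
    Polynomial.funext fun t => by simpa [eval_pencil] using h t
  have hAB : pencil A B ≠ 0 := fun h0 => hB (by simpa [h0] using (eval_pencil A B 0).symm)
  simpa [(mul_eq_zero.1 hmul).resolve_left hAB] using (eval_pencil C D 1).symm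

theorem isSymm_inv_mul {R : Type*} [CommRing R] {C D : Matrix ι ι R} (hC : IsUnit C.det)
    (h : D * Cᵀ = C * Dᵀ) : (C⁻¹ * D).IsSymm := by
  calc (C⁻¹ * D)ᵀ = C⁻¹ * (C * Dᵀ) * C⁻¹ᵀ := by
        rw [transpose_mul, nonsing_inv_mul_cancel_left _ _ hC]
    _ = C⁻¹ * D * (C⁻¹ * C)ᵀ := by rw [← h, transpose_mul]; simp only [Matrix.mul_assoc]
    _ = C⁻¹ * D := by rw [nonsing_inv_mul _ hC, transpose_one, Matrix.mul_one]

theorem ReflectsTransverse.eq_zero_of_det_ne_zero {A B C D : Matrix ι ι ℝ} {ρ : ℝ}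
    (h : ReflectsTransverse (fromBlocks A B C D)) (hρ : ρ ≠ 0)
    (hJ : (fromBlocks A B C D)ᵀ * J ι ℝ * fromBlocks A B C D = ρ • J ι ℝ)
    (hB : B.det ≠ 0) (hC : C.det ≠ 0) : D = 0 := by
  have hCu : IsUnit C.det := hC.isUnit
  have hDC : D * Cᵀ = C * Dᵀ := by
    have h' := mul_J_mul_transpose_of_transpose_mul_J_mul hρ hJ
    rw [mul_J_mul_transpose_fromBlocks, J, fromBlocks_smul, fromBlocks_inj] at h'
    simpa [sub_eq_zero] using h'.2.2.2
  have hsingular (R : Matrix ι ι ℝ) (hR : R.IsSymm) (hdet : R.det = 0) :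
      (C * R + D).det = 0 :=
    det_add_eq_zero_of_forall_det_mul_det_eq_zero (A := A * R) hB fun t => by
      simpa using h.det_mul_det_eq_zero (P := t • R) (Q := 1) (by simp [hR.eq])
        (.inl (by rw [det_smul, hdet, mul_zero]))
  have hK : C⁻¹ * D = 0 :=
    eq_zero_of_forall_det_add_eq_zero (isSymm_inv_mul hCu hDC) fun R hR hdet => by
      rw [← nonsing_inv_mul_cancel_left C R hCu, ← mul_add, det_mul, hsingular R hR hdet, mul_zero]
  rw [← mul_nonsing_inv_cancel_left C D hCu, hK, mul_zero]

theorem eq_one_or_exists_eq_fromBlocks {K : Type*} [Field K] [NeZero (2 : K)]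
    {M : Matrix (ι ⊕ ι) (ι ⊕ ι) K} {ρ : K} (hJ : Mᵀ * J ι K * M = ρ • J ι K) (hρ : ρ * ρ = 1)
    (hM : M * M = 1) (hfix : M * fromRows (1 : Matrix ι ι K) (1 : Matrix ι ι K) = fromRows 1 1) :
    (M = 1 ∧ ρ = 1) ∨ ∃ A : Matrix ι ι K, A.IsSymm ∧ M = fromBlocks A (1 - A) (1 + A) (-A) := by
  obtain ⟨A, B, C, D, rfl⟩ : ∃ A B C D, M = fromBlocks A B C D :=
    ⟨_, _, _, _, (fromBlocks_toBlocks M).symm⟩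
  rw [fromBlocks_mul_fromRows, fromRows_ext_iff, mul_one, mul_one, mul_one, mul_one,
    ← eq_sub_iff_add_eq', ← eq_sub_iff_add_eq'] at hfix
  rw [fromBlocks_multiply, ← fromBlocks_one, fromBlocks_inj] at hM
  rw [transpose_fromBlocks_mul_J_mul, J, fromBlocks_smul, fromBlocks_inj] at hJ
  obtain ⟨rfl, rfl⟩ := hfix
  obtain ⟨hAC, -, hDB, -⟩ := hJ
  obtain ⟨-, -, hCA, -⟩ := hM
  rw [smul_zero, sub_eq_zero] at hAC
  have hA : A = C + ρ • 1 := by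
    rw [← hDB]
    simp only [transpose_sub, transpose_one, sub_mul, one_mul, hAC]
    abel
  subst hA
  have hC : (1 + ρ) • C = 0 := by
    rw [← hCA]
    simp only [mul_add, sub_mul, one_mul, mul_smul_comm, mul_one, add_smul, one_smul]
    abel
  rcases mul_self_eq_one_iff.1 hρ with rfl | rfl
  · rw [one_add_one_eq_two] at hC
    have hC0 : C = 0 := (smul_eq_zero.1 hC).resolve_left two_ne_zero
    exact .inl ⟨by simp [hC0], rfl⟩
  · have hsymm : Cᵀ = C := by
      simpa [mul_add, add_mul, transpose_add] using hAC
    exact .inr ⟨C - 1, by simp [IsSymm, hsymm], by simp [sub_eq_add_neg]⟩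

theorem ReflectsTransverse.eq_zero_of_isSymm {A : Matrix ι ι ℝ} (hA : A.IsSymm)
    (h : ReflectsTransverse (fromBlocks A (1 - A) (1 + A) (-A))) : A = 0 := by
  obtain ⟨C, d, rfl, hsymm, hdet⟩ := exists_diagonalizing_algHom hA
  suffices d = 0 by rw [this, map_zero]
  funext i
  have hval (s t : ℝ) (hst : s = 0 ∨ t = 0) :
      (d i * s + (1 - d i) * t) * ((1 + d i) * s - d i * t) = 0 := by
    have hdeg := h.det_mul_det_eq_zero (P := C (Function.update 1 i s))
      (Q := C (Function.update 1 i t))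
      (by rw [(hsymm _).eq, (hsymm _).eq, ← map_mul, ← map_mul, mul_comm]) <| by
        rw [hdet, hdet]
        exact hst.imp (fun h0 => Finset.prod_eq_zero (Finset.mem_univ i) (by simp [h0]))
          fun h0 => Finset.prod_eq_zero (Finset.mem_univ i) (by simp [h0])
    simp only [← map_one C, ← map_neg, ← map_sub, ← map_mul, ← map_add] at hdeg
    rw [hdet, hdet, ← Finset.prod_mul_distrib, Finset.prod_eq_zero_iff] at hdeg
    obtain ⟨j, -, hj⟩ := hdeg
    rcases eq_or_ne j i with rfl | hji
    · simpa [sub_eq_add_neg] using hj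
    · simp [hji] at hj
  have h1 := hval 0 1 (by simp)
  have h2 := hval 1 0 (by simp)
  simp only [Pi.zero_apply]
  linarith

end LinearAlgebra

section Analysis

variable {ι E G H : Type*} [Fintype ι] [NormedAddCommGroup E] [NormedSpace ℝ E]
  [NormedAddCommGroup G] [NormedSpace ℝ G] [NormedAddCommGroup H] [NormedSpace ℝ H]

theorem analyticAt_clm_apply {L : E → G →L[ℝ] H} {g : E → G} {x : E} (hL : AnalyticAt ℝ L x)
    (hg : AnalyticAt ℝ g x) : AnalyticAt ℝ (fun y => L y (g y)) x :=
  AnalyticAt.comp (g := fun q : (G →L[ℝ] H) × G => q.1 q.2) (f := fun y => (L y, g y))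
    ((ContinuousLinearMap.id ℝ (G →L[ℝ] H)).analyticAt_bilinear (L x, g x)) (hL.prod hg)

theorem analyticAt_dotProduct {f g : E → ι → ℝ} {x : E} (hf : AnalyticAt ℝ f x)
    (hg : AnalyticAt ℝ g x) : AnalyticAt ℝ (fun y => f y ⬝ᵥ g y) x :=
  Finset.analyticAt_fun_sum _ fun i _ => (analyticAt_pi_iff.1 hf i).mul (analyticAt_pi_iff.1 hg i)

theorem analyticAt_det [DecidableEq ι] {N : E → Matrix ι ι ℝ} {x : E}
    (hN : ∀ i j, AnalyticAt ℝ (fun y => N y i j) x) : AnalyticAt ℝ (fun y => (N y).det) x := by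
  simp only [det_apply]
  exact Finset.analyticAt_fun_sum _ fun σ _ =>
    (Finset.analyticAt_fun_prod _ fun i _ => hN _ _).const_smul

theorem fderiv_dotProduct_apply {f g : E → ι → ℝ} {x : E} (hf : DifferentiableAt ℝ f x)
    (hg : DifferentiableAt ℝ g x) (v : E) :
    fderiv ℝ (fun y => f y ⬝ᵥ g y) x v = fderiv ℝ f x v ⬝ᵥ g x + f x ⬝ᵥ fderiv ℝ g x v := by
  have h := (LinearMap.toContinuousBilinearMap
    (dotProductBilin ℝ ℝ (m := ι))).hasFDerivAt_of_bilinear hf.hasFDerivAt hg.hasFDerivAt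
  refine (congrArg (fun L : E →L[ℝ] ℝ => L v) h.fderiv).trans ?_
  exact add_comm _ _

theorem dense_setOf_ne_zero_of_analytic {f : E → ℝ} (hf : AnalyticOnNhd ℝ f Set.univ) {x₀ : E}
    (hx₀ : f x₀ ≠ 0) : Dense {x | f x ≠ 0} := by
  by_contra hnd
  obtain ⟨y, hy⟩ := not_forall.1 hnd
  refine hx₀ (congrFun (hf.eq_of_eventuallyEq analyticOnNhd_const (z₀ := y) ?_) x₀)
  filter_upwards [isClosed_closure.isOpen_compl.mem_nhds hy] with z hz
  by_contra hne
  exact hz (subset_closure hne)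

theorem eq_of_fderiv_along_segment_eq_zero {f : E → H} (hf : Differentiable ℝ f) {p u : E}
    (h : ∀ t : ℝ, fderiv ℝ f (p + t • u) u = 0) : f (p + u) = f p := by
  have hd (t : ℝ) : HasDerivAt (fun t : ℝ => f (p + t • u)) 0 t := by
    have hline : HasDerivAt (fun t : ℝ => p + t • u) u t := by
      simpa using ((hasDerivAt_id t).smul_const u).const_add p
    exact h t ▸ (hf (p + t • u)).hasFDerivAt.comp_hasDerivAt t hline
  simpa using is_const_of_deriv_eq_zero (fun t => (hd t).differentiableAt) (fun t => (hd t).deriv)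
    1 0

/- Near `p` the midpoint map `x ↦ (x + F x) / 2` is injective, and it agrees at `x` and `F x`. -/
theorem eventually_eq_self_of_involutive [CompleteSpace E] {F : E → E} {p : E}
    (hF : HasStrictFDerivAt F (ContinuousLinearMap.id ℝ E) p) (hinv : Function.Involutive F)
    (hp : F p = p) : ∀ᶠ x in nhds p, F x = x := by
  have hmid : HasStrictFDerivAt (fun x => (2 : ℝ)⁻¹ • (x + F x))
      ((ContinuousLinearEquiv.refl ℝ E : E ≃L[ℝ] E) : E →L[ℝ] E) p := by
    refine (((hasStrictFDerivAt_id p).add hF).const_smul (2 : ℝ)⁻¹).congr_fderiv ?_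
    ext x
    change (2 : ℝ)⁻¹ • (x + x) = x
    rw [← two_smul ℝ x, smul_smul, inv_mul_cancel₀ two_ne_zero, one_smul]
  have hcont : Filter.Tendsto F (nhds p) (nhds p) := by
    simpa [ContinuousAt, hp] using hF.hasFDerivAt.continuousAt
  filter_upwards [hmid.eventually_left_inverse, hcont.eventually hmid.eventually_left_inverse]
    with x hx hFx
  rw [hinv x, add_comm, hx] at hFx
  exact hFx.symm

end Analysis

/-- The space `ℝⁿ × ℝ × ℝⁿ` of points `(θ, a, b)`, i.e. the 1-jets of functions of `θ`. -/
abbrev JetSpace (ι : Type*) := (ι → ℝ) × ℝ × (ι → ℝ)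

section Contact

variable {ι : Type*} [Fintype ι]

/-- The contact form `da - ∑ᵢ bᵢ dθᵢ` at `p = (θ, a, b)`. -/
def contactForm (p : JetSpace ι) : JetSpace ι →ₗ[ℝ] ℝ where
  toFun u := u.2.1 - p.2.2 ⬝ᵥ u.1
  map_add' u v := by simp [dotProduct_add]; ring
  map_smul' c u := by simp [dotProduct_smul]; ring

/-- The Reeb field `∂/∂a` of the contact form, which is constant. -/
def reeb : JetSpace ι := (0, 1, 0)

/-- The vector of the contact plane at `p` with given `θ`- and `b`-components, indexed by the left
and right summand of `ι ⊕ ι` respectively. -/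
def contactLift (p : JetSpace ι) : (ι ⊕ ι → ℝ) →ₗ[ℝ] JetSpace ι where
  toFun w := (w ∘ Sum.inl, p.2.2 ⬝ᵥ (w ∘ Sum.inl), w ∘ Sum.inr)
  map_add' v w := by simp [Pi.add_comp, dotProduct_add]
  map_smul' c w := by simp [Pi.smul_comp, dotProduct_smul]

/-- The `θ`- and `b`-components of a tangent vector: coordinates on each contact plane. -/
def contactCoords : JetSpace ι →ₗ[ℝ] ι ⊕ ι → ℝ where
  toFun u := Sum.elim u.1 u.2.2
  map_add' u v := Sum.elim_add_add u.1 v.1 u.2.2 v.2.2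
  map_smul' c u := by ext (i | i) <;> rfl

@[simp]
theorem contactForm_contactLift (p : JetSpace ι) (w : ι ⊕ ι → ℝ) :
    contactForm p (contactLift p w) = 0 :=
  sub_self _

theorem contactForm_reeb (p : JetSpace ι) : contactForm p reeb = 1 := by
  simp [contactForm, reeb]

@[simp]
theorem contactCoords_contactLift (p : JetSpace ι) (w : ι ⊕ ι → ℝ) :
    contactCoords (contactLift p w) = w :=
  Sum.elim_comp_inl_inr w

theorem contactLift_contactCoords_add (p u : JetSpace ι) :
    contactLift p (contactCoords u) + contactForm p u • reeb = u := by
  simp [contactLift, contactCoords, contactForm, reeb]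

theorem contactLift_contactCoords {p u : JetSpace ι} (hu : contactForm p u = 0) :
    contactLift p (contactCoords u) = u := by
  simpa [hu] using contactLift_contactCoords_add p u

theorem differentiableAt_contactForm {E : Type*} [NormedAddCommGroup E] [NormedSpace ℝ E]
    {f g : E → JetSpace ι} {x : E} (hf : DifferentiableAt ℝ f x) (hg : DifferentiableAt ℝ g x) :
    DifferentiableAt ℝ (fun y => contactForm (f y) (g y)) x := by
  change DifferentiableAt ℝ (fun y => (g y).2.1 - (f y).2.2 ⬝ᵥ (g y).1) x
  unfold dotProduct
  fun_prop

theorem fderiv_contactForm_apply {E : Type*} [NormedAddCommGroup E] [NormedSpace ℝ E]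
    {f g : E → JetSpace ι} {x : E} (hf : DifferentiableAt ℝ f x) (hg : DifferentiableAt ℝ g x)
    (v : E) : fderiv ℝ (fun y => contactForm (f y) (g y)) x v =
      contactForm (f x) (fderiv ℝ g x v) - (fderiv ℝ f x v).2.2 ⬝ᵥ (g x).1 := by
  have hdot : DifferentiableAt ℝ (fun y => (f y).2.2 ⬝ᵥ (g y).1) x := by
    unfold dotProduct
    fun_prop
  change fderiv ℝ (fun y => (g y).2.1 - (f y).2.2 ⬝ᵥ (g y).1) x v = _
  rw [fderiv_fun_sub hg.snd.fst hdot, _root_.sub_apply, fderiv_dotProduct_apply hf.snd.snd hg.fst,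
    hg.hasFDerivAt.snd.fst.fderiv, hg.hasFDerivAt.fst.fderiv, hf.hasFDerivAt.snd.snd.fderiv]
  simp [contactForm, sub_sub, add_comm]

/-- `F` maps contact planes into contact planes. -/
def IsContactMap (F : JetSpace ι → JetSpace ι) : Prop :=
  ∀ p u, contactForm p u = 0 → contactForm (F p) (fderiv ℝ F p u) = 0

/-- For a contact map `F`, the function `ρ` with `F^* α = ρ α`, where `α` is the contact form. -/
noncomputable def conformalFactor (F : JetSpace ι → JetSpace ι) (p : JetSpace ι) : ℝ :=
  contactForm (F p) (fderiv ℝ F p reeb)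

theorem IsContactMap.contactForm_fderiv {F : JetSpace ι → JetSpace ι} (hF : IsContactMap F)
    (p u : JetSpace ι) :
    contactForm (F p) (fderiv ℝ F p u) = conformalFactor F p * contactForm p u := by
  conv_lhs => rw [← contactLift_contactCoords_add p u, map_add, map_smul, map_add, map_smul,
    hF p _ (contactForm_contactLift p _), zero_add, smul_eq_mul, mul_comm]
  rfl

theorem IsContactMap.conformalFactor_comp {F G : JetSpace ι → JetSpace ι} (hG : IsContactMap G)
    {p : JetSpace ι} (hGd : DifferentiableAt ℝ G (F p)) (hFd : DifferentiableAt ℝ F p) :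
    conformalFactor (G ∘ F) p = conformalFactor G (F p) * conformalFactor F p := by
  rw [conformalFactor, fderiv_comp p hGd hFd]
  exact hG.contactForm_fderiv (F p) _

@[simp]
theorem conformalFactor_id (p : JetSpace ι) : conformalFactor id p = 1 := by
  simp [conformalFactor, contactForm_reeb]

/- This is the exterior derivative of `F^* α = ρ α`, where `α` is the contact form, evaluated on two
vectors of the contact plane. -/
theorem IsContactMap.dotProduct_fderiv_sub {F : JetSpace ι → JetSpace ι} (hF : IsContactMap F)
    (hF₂ : ContDiff ℝ 2 F) {p u v : JetSpace ι} (hu : contactForm p u = 0)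
    (hv : contactForm p v = 0) :
    (fderiv ℝ F p u).2.2 ⬝ᵥ (fderiv ℝ F p v).1 - (fderiv ℝ F p v).2.2 ⬝ᵥ (fderiv ℝ F p u).1 =
      conformalFactor F p * (u.2.2 ⬝ᵥ v.1 - v.2.2 ⬝ᵥ u.1) := by
  have hFd : DifferentiableAt ℝ F p := hF₂.contDiffAt.differentiableAt two_ne_zero
  have hdF : DifferentiableAt ℝ (fderiv ℝ F) p :=
    (hF₂.fderiv_right (m := 1) le_rfl).contDiffAt.differentiableAt one_ne_zero
  have hdFu (u : JetSpace ι) : DifferentiableAt ℝ (fun q => fderiv ℝ F q u) p :=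
    hdF.clm_apply (differentiableAt_const u)
  have hρ : DifferentiableAt ℝ (conformalFactor F) p :=
    differentiableAt_contactForm hFd (hdFu reeb)
  have hderiv {u v : JetSpace ι} (hu : contactForm p u = 0) :
      contactForm (F p) (fderiv ℝ (fderiv ℝ F) p v u) -
        (fderiv ℝ F p v).2.2 ⬝ᵥ (fderiv ℝ F p u).1 = -(conformalFactor F p * v.2.2 ⬝ᵥ u.1) := by
    have h := congrArg (fun f => fderiv ℝ f p v) (funext fun q => hF.contactForm_fderiv q u)
    rw [fderiv_contactForm_apply hFd (hdFu u), fderiv_fun_mul hρ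
      (differentiableAt_contactForm differentiableAt_fun_id (differentiableAt_const u)),
      _root_.add_apply, _root_.smul_apply, fderiv_contactForm_apply differentiableAt_fun_id
      (differentiableAt_const u), fderiv_clm_apply hdF (differentiableAt_const u)] at h
    simpa [hu] using h
  have hsymm : fderiv ℝ (fderiv ℝ F) p u v = fderiv ℝ (fderiv ℝ F) p v u :=
    hF₂.contDiffAt.isSymmSndFDerivAt (by simp) u v
  have huv := hderiv (v := v) hu
  have hvu := hderiv (v := u) hv
  rw [hsymm] at hvu
  linear_combination huv - hvu

variable [DecidableEq ι]

/-- The matrix of the differential of `F` between the contact planes at `p` and `F p`, in the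
coordinates `contactCoords`. -/
noncomputable def contactJacobian (F : JetSpace ι → JetSpace ι) (p : JetSpace ι) :
    Matrix (ι ⊕ ι) (ι ⊕ ι) ℝ :=
  LinearMap.toMatrix' (contactCoords ∘ₗ (fderiv ℝ F p : JetSpace ι →ₗ[ℝ] JetSpace ι) ∘ₗ
    contactLift p)

theorem contactJacobian_mulVec (F : JetSpace ι → JetSpace ι) (p : JetSpace ι) (w : ι ⊕ ι → ℝ) :
    contactJacobian F p *ᵥ w = contactCoords (fderiv ℝ F p (contactLift p w)) :=
  LinearMap.toMatrix'_mulVec _ w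

theorem IsContactMap.fderiv_contactLift {F : JetSpace ι → JetSpace ι} (hF : IsContactMap F)
    (p : JetSpace ι) (w : ι ⊕ ι → ℝ) :
    fderiv ℝ F p (contactLift p w) = contactLift (F p) (contactJacobian F p *ᵥ w) := by
  rw [contactJacobian_mulVec, contactLift_contactCoords (hF p _ (contactForm_contactLift p w))]

theorem contactJacobian_id (p : JetSpace ι) : contactJacobian id p = 1 :=
  ext_of_mulVec_single fun i => by
    rw [contactJacobian_mulVec, fderiv_id, one_mulVec]
    exact contactCoords_contactLift p _

theorem IsContactMap.contactJacobian_comp {F G : JetSpace ι → JetSpace ι} (hF : IsContactMap F)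
    {p : JetSpace ι} (hGd : DifferentiableAt ℝ G (F p)) (hFd : DifferentiableAt ℝ F p) :
    contactJacobian (G ∘ F) p = contactJacobian G (F p) * contactJacobian F p :=
  ext_of_mulVec_single fun i => by
    rw [← mulVec_mulVec, contactJacobian_mulVec, contactJacobian_mulVec G,
      ← hF.fderiv_contactLift, fderiv_comp p hGd hFd]
    rfl

theorem analyticAt_contactJacobian {F : JetSpace ι → JetSpace ι} {p : JetSpace ι}
    (hF : AnalyticAt ℝ F p) (i j : ι ⊕ ι) : AnalyticAt ℝ (fun q => contactJacobian F q i j) p := by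
  have hlift : AnalyticAt ℝ (fun q : JetSpace ι => contactLift q (Pi.single j 1)) p :=
    analyticAt_const.prod ((analyticAt_dotProduct (analyticAt_snd.comp analyticAt_snd)
      analyticAt_const).prod analyticAt_const)
  have hdF := analyticAt_clm_apply hF.fderiv hlift
  simp only [contactJacobian, LinearMap.toMatrix'_apply]
  rcases i with i | i
  · exact analyticAt_pi_iff.1 (analyticAt_fst.comp hdF) i
  · exact analyticAt_pi_iff.1 (analyticAt_snd.comp (analyticAt_snd.comp hdF)) i

theorem IsContactMap.transpose_mul_J_mul {F : JetSpace ι → JetSpace ι} (hF : IsContactMap F)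
    (hF₂ : ContDiff ℝ 2 F) (p : JetSpace ι) :
    (contactJacobian F p)ᵀ * J ι ℝ * contactJacobian F p = conformalFactor F p • J ι ℝ := by
  have h (x y : ι ⊕ ι → ℝ) :
      x ⬝ᵥ (((contactJacobian F p)ᵀ * J ι ℝ * contactJacobian F p) *ᵥ y) =
        x ⬝ᵥ ((conformalFactor F p • J ι ℝ) *ᵥ y) := by
    rw [← mulVec_mulVec, ← mulVec_mulVec, dotProduct_mulVec x, vecMul_transpose, smul_mulVec,
      dotProduct_smul, dotProduct_J_mulVec, dotProduct_J_mulVec, contactJacobian_mulVec,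
      contactJacobian_mulVec]
    exact hF.dotProduct_fderiv_sub hF₂ (contactForm_contactLift p x) (contactForm_contactLift p y)
  ext i j
  simpa using h (Pi.single i 1) (Pi.single j 1)

end Contact

section Legendrian

variable {ι : Type*} [Fintype ι]

/-- A map into `JetSpace ι` everywhere tangent to the contact planes. -/
def IsLegendrian {E : Type*} [NormedAddCommGroup E] [NormedSpace ℝ E] (g : E → JetSpace ι) : Prop :=
  ∀ x v, contactForm (g x) (fderiv ℝ g x v) = 0

theorem IsContactMap.isLegendrian_comp {E : Type*} [NormedAddCommGroup E] [NormedSpace ℝ E]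
    {F : JetSpace ι → JetSpace ι} {g : E → JetSpace ι} (hF : IsContactMap F)
    (hg : IsLegendrian g) (hFd : Differentiable ℝ F) (hgd : Differentiable ℝ g) :
    IsLegendrian (F ∘ g) := fun x v => by
  rw [fderiv_comp x (hFd _) (hgd x)]
  exact hF _ _ (hg x v)

/-- The quadratic Legendrian map through `p` whose tangent plane at `p` is spanned by the columns
of the isotropic frame `S`. -/
noncomputable def quadraticLegendrian (p : JetSpace ι) (S : Matrix (ι ⊕ ι) ι ℝ) (x : ι → ℝ) :
    JetSpace ι :=
  p + contactLift p (S *ᵥ x) + (1 / 2 * (S.toRows₂ *ᵥ x ⬝ᵥ S.toRows₁ *ᵥ x)) • reeb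

/-- The parametrized graph of the 1-jet of `θ ↦ |θ|² / 2`, i.e. the image of `GY`. -/
noncomputable def paraboloidJet (x : ι → ℝ) : JetSpace ι := (x, 1 / 2 * (x ⬝ᵥ x), x)

theorem quadraticLegendrian_zero_fromRows_one_one [DecidableEq ι] :
    quadraticLegendrian (0 : JetSpace ι) (fromRows 1 1) = paraboloidJet := by
  funext x
  simp [quadraticLegendrian, paraboloidJet, contactLift, reeb, fromRows_mulVec]

@[simp]
theorem quadraticLegendrian_apply_zero (p : JetSpace ι) (S : Matrix (ι ⊕ ι) ι ℝ) :
    quadraticLegendrian p S 0 = p := by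
  simp [quadraticLegendrian]

theorem analyticOnNhd_quadraticLegendrian (p : JetSpace ι) (S : Matrix (ι ⊕ ι) ι ℝ) :
    AnalyticOnNhd ℝ (quadraticLegendrian p S) Set.univ := fun x _ => by
  have hmulVec (P : Matrix ι ι ℝ) : AnalyticAt ℝ (fun x => P *ᵥ x) x :=
    (LinearMap.toContinuousLinearMap P.mulVecLin).analyticAt x
  have hlift : AnalyticAt ℝ (fun x => contactLift p (S *ᵥ x)) x :=
    (LinearMap.toContinuousLinearMap (contactLift p ∘ₗ S.mulVecLin)).analyticAt x
  exact (analyticAt_const.add hlift).add ((analyticAt_const.mul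
    (analyticAt_dotProduct (hmulVec _) (hmulVec _))).smul analyticAt_const)

theorem differentiable_quadraticLegendrian (p : JetSpace ι) (S : Matrix (ι ⊕ ι) ι ℝ) :
    Differentiable ℝ (quadraticLegendrian p S) := fun x =>
  (analyticOnNhd_quadraticLegendrian p S x trivial).differentiableAt

theorem fderiv_quadraticLegendrian [DecidableEq ι] (p : JetSpace ι) {S : Matrix (ι ⊕ ι) ι ℝ}
    (hS : IsIsotropic S) (x v : ι → ℝ) :
    fderiv ℝ (quadraticLegendrian p S) x v =
      contactLift (quadraticLegendrian p S x) (S *ᵥ v) := by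
  have hmulVec (P : Matrix ι ι ℝ) : HasFDerivAt (fun x => P *ᵥ x)
      (LinearMap.toContinuousLinearMap P.mulVecLin) x :=
    (LinearMap.toContinuousLinearMap P.mulVecLin).hasFDerivAt
  have hlift : HasFDerivAt (fun x => contactLift p (S *ᵥ x))
      (LinearMap.toContinuousLinearMap (contactLift p ∘ₗ S.mulVecLin)) x :=
    (LinearMap.toContinuousLinearMap (contactLift p ∘ₗ S.mulVecLin)).hasFDerivAt
  have hdot : HasFDerivAt (fun x => S.toRows₂ *ᵥ x ⬝ᵥ S.toRows₁ *ᵥ x) _ x :=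
    (analyticAt_dotProduct (f := fun x => S.toRows₂ *ᵥ x) (g := fun x => S.toRows₁ *ᵥ x)
      ((LinearMap.toContinuousLinearMap S.toRows₂.mulVecLin).analyticAt x)
      ((LinearMap.toContinuousLinearMap S.toRows₁.mulVecLin).analyticAt x)
      ).differentiableAt.hasFDerivAt
  have hderiv : fderiv ℝ (quadraticLegendrian p S) x v = contactLift p (S *ᵥ v) +
      (1 / 2 * (S.toRows₂ *ᵥ v ⬝ᵥ S.toRows₁ *ᵥ x + S.toRows₂ *ᵥ x ⬝ᵥ S.toRows₁ *ᵥ v)) • reeb := by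
    have h := ((hlift.const_add p).add ((hdot.const_mul (1 / 2)).smul_const reeb)).fderiv
    refine (congrArg (fun L : (ι → ℝ) →L[ℝ] JetSpace ι => L v) h).trans ?_
    have h₂ := fderiv_dotProduct_apply (hmulVec S.toRows₂).differentiableAt
      (hmulVec S.toRows₁).differentiableAt v
    rw [(hmulVec _).fderiv, (hmulVec _).fderiv] at h₂
    simp [h₂]
  have hq : (quadraticLegendrian p S x).2.2 = p.2.2 + S.toRows₂ *ᵥ x := by
    simp [quadraticLegendrian, contactLift, reeb]
    rfl
  have hv : (S *ᵥ v) ∘ Sum.inl = S.toRows₁ *ᵥ v := rfl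
  simp only [hderiv, hS.dotProduct_toRows_mulVec_comm v x, contactLift, LinearMap.coe_mk,
    AddHom.coe_mk, hq, hv, add_dotProduct]
  simp [reeb]
  ring

theorem isLegendrian_quadraticLegendrian [DecidableEq ι] (p : JetSpace ι)
    {S : Matrix (ι ⊕ ι) ι ℝ} (hS : IsIsotropic S) : IsLegendrian (quadraticLegendrian p S) :=
  fun x v => by rw [fderiv_quadraticLegendrian p hS, contactForm_contactLift]

end Legendrian

section Foliations

variable {ι : Type*} [Fintype ι] [DecidableEq ι] {F : JetSpace ι → JetSpace ι}

theorem IsContactMap.vertical_invariants (hF : IsContactMap F) (hd : Differentiable ℝ F)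
    (h₂₂ : ∀ p, (contactJacobian F p).toBlocks₂₂ = 0) (θ : ι → ℝ) (a : ℝ) (b β : ι → ℝ) :
    (F (θ, a, b)).2.2 = (F (θ, a, β)).2.2 ∧
      contactForm (F (θ, a, b)) (F (θ, a, b)) = contactForm (F (θ, a, β)) (F (θ, a, β)) := by
  let u : JetSpace ι := (0, 0, b - β)
  have hu (q : JetSpace ι) : contactForm q u = 0 := by simp [contactForm, u]
  have hb (q : JetSpace ι) : (fderiv ℝ F q u).2.2 = 0 := by
    have hlift : u = contactLift q (Sum.elim 0 (b - β)) := by simp [contactLift, u]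
    rw [hlift, hF.fderiv_contactLift, ← fromBlocks_toBlocks (contactJacobian F q), h₂₂,
      fromBlocks_mulVec]
    simp [contactLift]
  have hend : (θ, a, b) = (θ, a, β) + u := by simp [u]
  rw [hend]
  constructor
  · refine eq_of_fderiv_along_segment_eq_zero (f := fun q => (F q).2.2) hd.snd.snd fun t => ?_
    rw [(hd _).hasFDerivAt.snd.snd.fderiv]
    exact hb _
  · refine eq_of_fderiv_along_segment_eq_zero (f := fun q => contactForm (F q) (F q))
      (fun q => differentiableAt_contactForm (hd q) (hd q)) fun t => ?_
    rw [fderiv_contactForm_apply (hd _) (hd _), hF _ u (hu _), hb, zero_dotProduct, sub_zero]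

theorem IsContactMap.horizontal_invariants (hF : IsContactMap F) (hd : Differentiable ℝ F)
    (h₁₁ : ∀ p, (contactJacobian F p).toBlocks₁₁ = 0) (θ v : ι → ℝ) (a : ℝ) (b : ι → ℝ) :
    (F (θ + v, a + b ⬝ᵥ v, b)).1 = (F (θ, a, b)).1 ∧
      (F (θ + v, a + b ⬝ᵥ v, b)).2.1 = (F (θ, a, b)).2.1 := by
  let u : JetSpace ι := (v, b ⬝ᵥ v, 0)
  let q (t : ℝ) : JetSpace ι := (θ, a, b) + t • u
  have hu (t : ℝ) : contactForm (q t) u = 0 := by simp [contactForm, u, q]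
  have hθ (t : ℝ) : (fderiv ℝ F (q t) u).1 = 0 := by
    rw [← contactLift_contactCoords (hu t), hF.fderiv_contactLift,
      ← fromBlocks_toBlocks (contactJacobian F (q t)), h₁₁]
    simp [contactLift, contactCoords, u, fromBlocks_mulVec]
  have ha (t : ℝ) : (fderiv ℝ F (q t) u).2.1 = 0 := by
    simpa [contactForm, hθ] using hF _ u (hu t)
  have hend : (θ + v, a + b ⬝ᵥ v, b) = (θ, a, b) + u := by simp [u]
  rw [hend]
  constructor
  · refine eq_of_fderiv_along_segment_eq_zero (f := fun q => (F q).1) hd.fst fun t => ?_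
    rw [(hd _).hasFDerivAt.fst.fderiv]
    exact hθ t
  · refine eq_of_fderiv_along_segment_eq_zero (f := fun q => (F q).2.1) hd.snd.fst fun t => ?_
    rw [(hd _).hasFDerivAt.snd.fst.fderiv]
    exact ha t

end Foliations

theorem eq_of_forall_dotProduct_sub_eq_on_sphere {ι : Type*} [Fintype ι] [Nonempty ι]
    {c y : ι → ℝ} {r s : ℝ} (hr : r ≠ 0)
    (h : ∀ v, v ⬝ᵥ v = r * r → (c + v) ⬝ᵥ y - s = 1 / 2 * ((c + v) ⬝ᵥ (c + v))) :
    y = c ∧ s = 1 / 2 * (c ⬝ᵥ c - r * r) := by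
  classical
  have hcoord (i : ι) (t : ℝ) (ht : t * t = r * r) :
      c ⬝ᵥ y + t * y i - s = 1 / 2 * (c ⬝ᵥ c + r * r) + t * c i := by
    have hi := h (Pi.single i t) (by simpa using ht)
    simp only [add_dotProduct, dotProduct_add, single_dotProduct, dotProduct_single,
      Pi.add_apply, Pi.single_eq_same] at hi
    linarith
  have hy : y = c := by
    ext i
    have hsub := congrArg₂ (· - ·) (hcoord i r rfl) (hcoord i (-r) (neg_mul_neg r r))
    exact mul_left_cancel₀ hr (by linear_combination hsub / 2)
  subst hy
  exact ⟨rfl, by linarith [hcoord (Classical.arbitrary ι) r rfl]⟩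

/-- The pointwise form `(θ, a, b) ↦ (b, ∑ᵢ bᵢ θᵢ - a, θ)` of the Legendre involution. -/
def legendreMap {ι : Type*} [Fintype ι] (p : JetSpace ι) : JetSpace ι :=
  (p.2.2, p.2.2 ⬝ᵥ p.1 - p.2.1, p.1)

section Rigidity

variable {ι : Type*} [Fintype ι] [DecidableEq ι] {F : JetSpace ι → JetSpace ι}

/-- The geometric properties of an analytic map inducing an involution of `GX` that fixes `GY`:
they leave only the identity and the Legendre map. -/
structure IsRigidContactInvolution (F : JetSpace ι → JetSpace ι) : Prop where
  analyticOnNhd : AnalyticOnNhd ℝ F Set.univ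
  involutive : Function.Involutive F
  isContactMap : IsContactMap F
  reflectsTransverse : ∀ p, ReflectsTransverse (contactJacobian F p)
  map_paraboloidJet : ∀ x, F (paraboloidJet x) = paraboloidJet x

namespace IsRigidContactInvolution

theorem differentiable (h : IsRigidContactInvolution F) : Differentiable ℝ F := fun p =>
  (h.analyticOnNhd p trivial).differentiableAt

theorem contDiff (h : IsRigidContactInvolution F) : ContDiff ℝ 2 F :=
  h.analyticOnNhd.contDiff

theorem contactJacobian_map_mul (h : IsRigidContactInvolution F) (p : JetSpace ι) :
    contactJacobian F (F p) * contactJacobian F p = 1 := by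
  rw [← h.isContactMap.contactJacobian_comp (h.differentiable _) (h.differentiable _),
    h.involutive.comp_self, contactJacobian_id]

theorem conformalFactor_map_mul (h : IsRigidContactInvolution F) (p : JetSpace ι) :
    conformalFactor F (F p) * conformalFactor F p = 1 := by
  rw [← h.isContactMap.conformalFactor_comp (h.differentiable _) (h.differentiable _),
    h.involutive.comp_self, conformalFactor_id]

theorem map_zero (h : IsRigidContactInvolution F) : F 0 = 0 := by
  have hzero : paraboloidJet (0 : ι → ℝ) = 0 := by
    simp [paraboloidJet]
  rw [← hzero, h.map_paraboloidJet]

theorem contactJacobian_zero_mul_fromRows (h : IsRigidContactInvolution F) :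
    contactJacobian F 0 * fromRows (1 : Matrix ι ι ℝ) (1 : Matrix ι ι ℝ) = fromRows 1 1 := by
  have hS : IsIsotropic (fromRows (1 : Matrix ι ι ℝ) 1) := isIsotropic_fromRows_iff.2 rfl
  have hcomp : F ∘ quadraticLegendrian 0 (fromRows 1 1) = quadraticLegendrian 0 (fromRows 1 1) := by
    rw [quadraticLegendrian_zero_fromRows_one_one]
    exact funext h.map_paraboloidJet
  refine ext_of_mulVec_single fun i => ?_
  have hi := congrArg (fun g => contactCoords (fderiv ℝ g 0 (Pi.single i 1))) hcomp
  beta_reduce at hi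
  rw [fderiv_comp _ (h.differentiable _) (differentiable_quadraticLegendrian _ _ _)] at hi
  rw [← mulVec_mulVec]
  simpa [fderiv_quadraticLegendrian _ hS, ← contactJacobian_mulVec] using hi

theorem eq_id_of_contactJacobian_zero_eq_one (h : IsRigidContactInvolution F)
    (hM : contactJacobian F 0 = 1) (hρ : conformalFactor F 0 = 1) : F = id := by
  let w : ι ⊕ ι → ℝ := contactCoords (fderiv ℝ F 0 reeb)
  have hplane (w : ι ⊕ ι → ℝ) : fderiv ℝ F 0 (contactLift 0 w) = contactLift 0 w := by
    rw [h.isContactMap.fderiv_contactLift, hM, h.map_zero, one_mulVec]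
  have hreeb_eq : fderiv ℝ F 0 reeb = contactLift 0 w + reeb := by
    have hform : contactForm 0 (fderiv ℝ F 0 reeb) = 1 := by
      rwa [conformalFactor, h.map_zero] at hρ
    simpa [hform] using (contactLift_contactCoords_add 0 (fderiv ℝ F 0 reeb)).symm
  have hsq : fderiv ℝ F 0 (fderiv ℝ F 0 reeb) = reeb := by
    have hcomp := fderiv_comp (0 : JetSpace ι) (h.differentiable _) (h.differentiable _)
    rw [h.involutive.comp_self, fderiv_id, h.map_zero] at hcomp
    exact (congrArg (fun L : JetSpace ι →L[ℝ] JetSpace ι => L reeb) hcomp).symm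
  have hw : contactLift 0 w = 0 := by
    rw [hreeb_eq, map_add, hplane, hreeb_eq, ← add_assoc, add_eq_right] at hsq
    exact self_eq_neg.1 (eq_neg_of_add_eq_zero_left hsq)
  have hfderiv : fderiv ℝ F 0 = ContinuousLinearMap.id ℝ (JetSpace ι) := by
    refine ContinuousLinearMap.ext fun u => ?_
    rw [← contactLift_contactCoords_add 0 u, map_add, map_smul, hplane, hreeb_eq, hw, zero_add]
    rfl
  have hstrict := (h.analyticOnNhd 0 trivial).hasStrictFDerivAt
  rw [hfderiv] at hstrict
  exact h.analyticOnNhd.eq_of_eventuallyEq analyticOnNhd_id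
    (eventually_eq_self_of_involutive hstrict h.involutive h.map_zero)

theorem eq_id_or_contactJacobian_zero_eq (h : IsRigidContactInvolution F) :
    F = id ∨ contactJacobian F 0 = fromBlocks 0 1 1 0 := by
  have hρ := h.conformalFactor_map_mul 0
  have hM := h.contactJacobian_map_mul 0
  rw [h.map_zero] at hρ hM
  obtain ⟨hone, hρ_one⟩ | ⟨A, hA, hblocks⟩ := eq_one_or_exists_eq_fromBlocks
    (h.isContactMap.transpose_mul_J_mul h.contDiff 0) hρ hM h.contactJacobian_zero_mul_fromRows
  · exact .inl (h.eq_id_of_contactJacobian_zero_eq_one hone hρ_one)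
  · have hA₀ : A = 0 := ReflectsTransverse.eq_zero_of_isSymm hA (hblocks ▸ h.reflectsTransverse 0)
    exact .inr (by simpa [hA₀] using hblocks)

theorem toBlocks₂₂_contactJacobian (h : IsRigidContactInvolution F)
    (hswap : contactJacobian F 0 = fromBlocks 0 1 1 0) (p : JetSpace ι) :
    (contactJacobian F p).toBlocks₂₂ = 0 := by
  have hentry (i j : ι ⊕ ι) : AnalyticOnNhd ℝ (fun p => contactJacobian F p i j) Set.univ :=
    fun p _ => analyticAt_contactJacobian (h.analyticOnNhd p trivial) i j
  have hB : ∀ᶠ q in nhds 0, (contactJacobian F q).toBlocks₁₂.det ≠ 0 :=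
    (analyticAt_det fun i j => hentry (.inl i) (.inr j) 0 trivial).continuousAt.eventually_ne
      (by simp [hswap])
  have hC : ∀ᶠ q in nhds 0, (contactJacobian F q).toBlocks₂₁.det ≠ 0 :=
    (analyticAt_det fun i j => hentry (.inr i) (.inl j) 0 trivial).continuousAt.eventually_ne
      (by simp [hswap])
  have hlocal : ∀ᶠ q in nhds 0, (contactJacobian F q).toBlocks₂₂ = 0 := by
    filter_upwards [hB, hC] with q hBq hCq
    have hreflects := h.reflectsTransverse q
    have hsymplectic := h.isContactMap.transpose_mul_J_mul h.contDiff q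
    rw [← fromBlocks_toBlocks (contactJacobian F q)] at hreflects hsymplectic
    exact hreflects.eq_zero_of_det_ne_zero (right_ne_zero_of_mul_eq_one
      (h.conformalFactor_map_mul q)) hsymplectic hBq hCq
  ext i j
  refine congrFun ((hentry (Sum.inr i) (Sum.inr j)).eq_of_eventuallyEq analyticOnNhd_const
    (z₀ := 0) ?_) p
  exact hlocal.mono fun q hq => congrFun (congrFun hq i) j

theorem toBlocks₁₁_contactJacobian (h : IsRigidContactInvolution F)
    (hswap : contactJacobian F 0 = fromBlocks 0 1 1 0) (p : JetSpace ι) :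
    (contactJacobian F p).toBlocks₁₁ = 0 := by
  have hmul := h.contactJacobian_map_mul p
  rw [← fromBlocks_toBlocks (contactJacobian F p), ← fromBlocks_toBlocks (contactJacobian F (F p)),
    fromBlocks_multiply, h.toBlocks₂₂_contactJacobian hswap, h.toBlocks₂₂_contactJacobian hswap,
    ← fromBlocks_one, fromBlocks_inj] at hmul
  obtain ⟨-, -, h₂₁, h₂₂⟩ := hmul
  rw [zero_mul, add_zero] at h₂₁ h₂₂
  rw [← Matrix.one_mul (contactJacobian F p).toBlocks₁₁, ← mul_eq_one_comm.1 h₂₂,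
    Matrix.mul_assoc, h₂₁, Matrix.mul_zero]

/- The point `(x, |x|² / 2, p.2.2)` lies on the horizontal leaf through `p` and on the vertical leaf
through `paraboloidJet x`. -/
theorem dotProduct_map_sub_map (h : IsRigidContactInvolution F)
    (hswap : contactJacobian F 0 = fromBlocks 0 1 1 0) {p : JetSpace ι} {x : ι → ℝ}
    (hx : p.2.1 + p.2.2 ⬝ᵥ (x - p.1) = 1 / 2 * (x ⬝ᵥ x)) :
    x ⬝ᵥ (F p).1 - (F p).2.1 = 1 / 2 * (x ⬝ᵥ x) := by
  obtain ⟨hθ, ha⟩ := h.isContactMap.horizontal_invariants h.differentiable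
    (h.toBlocks₁₁_contactJacobian hswap) p.1 (x - p.1) p.2.1 p.2.2
  obtain ⟨hb, hform⟩ := h.isContactMap.vertical_invariants h.differentiable
    (h.toBlocks₂₂_contactJacobian hswap) x (1 / 2 * (x ⬝ᵥ x)) p.2.2 x
  have hpar : F (x, 1 / 2 * (x ⬝ᵥ x), x) = (x, 1 / 2 * (x ⬝ᵥ x), x) := h.map_paraboloidJet x
  rw [add_sub_cancel, hx] at hθ ha
  simp only [contactForm, LinearMap.coe_mk, AddHom.coe_mk, hpar] at hb hform
  rw [hb, hθ, ha] at hform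
  linarith

/- The hyperplane of slope `p.2.2` through `(p.1, p.2.1)` meets the paraboloid over a sphere with
centre `p.2.2`. -/
theorem map_eq_of_lt [Nonempty ι] (h : IsRigidContactInvolution F)
    (hswap : contactJacobian F 0 = fromBlocks 0 1 1 0) {p : JetSpace ι}
    (hp : 2 * (p.2.2 ⬝ᵥ p.1 - p.2.1) < p.2.2 ⬝ᵥ p.2.2) :
    (F p).1 = p.2.2 ∧ (F p).2.1 = p.2.2 ⬝ᵥ p.1 - p.2.1 := by
  have hpos : 0 < p.2.2 ⬝ᵥ p.2.2 - 2 * (p.2.2 ⬝ᵥ p.1 - p.2.1) := sub_pos.2 hp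
  have hr := Real.mul_self_sqrt hpos.le
  obtain ⟨hb, hs⟩ := eq_of_forall_dotProduct_sub_eq_on_sphere (Real.sqrt_pos.2 hpos).ne'
    (c := p.2.2) fun v hv => h.dotProduct_map_sub_map hswap (by
      rw [hr] at hv
      simp only [add_dotProduct, dotProduct_add, dotProduct_sub, dotProduct_comm v, hv]
      ring)
  exact ⟨hb, by rw [hs, hr]; ring⟩

theorem eq_legendreMap [Nonempty ι] (h : IsRigidContactInvolution F)
    (hswap : contactJacobian F 0 = fromBlocks 0 1 1 0) : F = legendreMap := by
  have hfst : AnalyticOnNhd ℝ (fun p => ((F p).1, (F p).2.1)) Set.univ := fun p _ =>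
    (analyticAt_fst.comp (h.analyticOnNhd p trivial)).prod
      (analyticAt_fst.comp (analyticAt_snd.comp (h.analyticOnNhd p trivial)))
  have hb (p : JetSpace ι) : AnalyticAt ℝ (fun q : JetSpace ι => q.2.2) p :=
    analyticAt_snd.comp analyticAt_snd
  have hlegendre : AnalyticOnNhd ℝ
      (fun p : JetSpace ι => (p.2.2, p.2.2 ⬝ᵥ p.1 - p.2.1)) Set.univ := fun p _ =>
    (hb p).prod ((analyticAt_dotProduct (hb p) analyticAt_fst).sub
      (analyticAt_fst.comp analyticAt_snd))
  have hlocal : ∀ᶠ p : JetSpace ι in nhds (0, 1, 0),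
      2 * (p.2.2 ⬝ᵥ p.1 - p.2.1) < p.2.2 ⬝ᵥ p.2.2 :=
    ContinuousAt.eventually_lt (by fun_prop) (by fun_prop) (by simp)
  have heq := hfst.eq_of_eventuallyEq hlegendre (hlocal.mono fun p hp =>
    Prod.ext (h.map_eq_of_lt hswap hp).1 (h.map_eq_of_lt hswap hp).2)
  have hθ (p : JetSpace ι) : (F p).1 = p.2.2 := congrArg Prod.fst (congrFun heq p)
  exact funext fun p => Prod.ext (hθ p) (Prod.ext (congrArg Prod.snd (congrFun heq p))
    (by rw [← hθ, h.involutive]; rfl))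

theorem eq_id_or_eq_legendreMap [Nonempty ι] (h : IsRigidContactInvolution F) :
    F = id ∨ F = legendreMap :=
  h.eq_id_or_contactJacobian_zero_eq.imp_right h.eq_legendreMap

end IsRigidContactInvolution

end Rigidity

section GenericMaps

variable {n : ℕ}

/-- The triple of components of a map into `JetSpace (Fin n)`, inverse to `packTriple`. -/
def unpackTriple (g : (Fin n → ℝ) → JetSpace (Fin n)) : TripleMap n :=
  (fun x => (g x).1, fun x => (g x).2.1, fun x => (g x).2.2)

theorem smoothTriple_unpackTriple {g : (Fin n → ℝ) → JetSpace (Fin n)}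
    (hg : ContDiff ℝ (⊤ : ℕ∞) g) : SmoothTriple n (unpackTriple g) :=
  ⟨hg.fst, hg.snd.fst, hg.snd.snd⟩

theorem creative_unpackTriple_iff {g : (Fin n → ℝ) → JetSpace (Fin n)} (hg : Differentiable ℝ g) :
    Creative n (unpackTriple g) ↔ IsLegendrian g := by
  have ha (x v) : fderiv ℝ (fun x => (g x).2.1) x v = (fderiv ℝ g x v).2.1 := by
    rw [(hg x).hasFDerivAt.snd.fst.fderiv]
    rfl
  have hθ (x v i) : fderiv ℝ (fun x => (g x).1 i) x v = (fderiv ℝ g x v).1 i := by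
    rw [(hasFDerivAt_pi'.1 (hg x).hasFDerivAt.fst i).fderiv]
    rfl
  simp only [Creative, IsLegendrian, unpackTriple, ha, hθ]
  exact forall₂_congr fun x v => sub_eq_zero.symm

theorem mem_RegPts_iff {f : (Fin n → ℝ) → Fin n → ℝ} {x : Fin n → ℝ} :
    x ∈ RegPts n f ↔
      (LinearMap.toMatrix' (fderiv ℝ f x : (Fin n → ℝ) →ₗ[ℝ] Fin n → ℝ)).det ≠ 0 := by
  rw [LinearMap.det_toMatrix', ← isUnit_iff_ne_zero, ← LinearMap.isUnit_iff_isUnit_det,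
    Module.End.isUnit_iff]
  rfl

theorem mem_RegPts_iff_of_fderiv_eq {f : (Fin n → ℝ) → Fin n → ℝ} {x : Fin n → ℝ}
    {N : Matrix (Fin n) (Fin n) ℝ} (h : ∀ v, fderiv ℝ f x v = N *ᵥ v) :
    x ∈ RegPts n f ↔ N.det ≠ 0 := by
  have hN : (fderiv ℝ f x : (Fin n → ℝ) →ₗ[ℝ] Fin n → ℝ) = N.toLin' := LinearMap.ext h
  rw [mem_RegPts_iff, hN, LinearMap.toMatrix'_toLin']

theorem dense_RegPts_of_analytic {f : (Fin n → ℝ) → Fin n → ℝ}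
    (hf : AnalyticOnNhd ℝ f Set.univ) {x₀ : Fin n → ℝ} (hx₀ : x₀ ∈ RegPts n f) :
    Dense (RegPts n f) := by
  have hentry (x : Fin n → ℝ) (i j : Fin n) : AnalyticAt ℝ (fun y => LinearMap.toMatrix'
      (fderiv ℝ f y : (Fin n → ℝ) →ₗ[ℝ] Fin n → ℝ) i j) x := by
    simp only [LinearMap.toMatrix'_apply, ContinuousLinearMap.coe_coe]
    exact analyticAt_pi_iff.1 (analyticAt_clm_apply (hf.fderiv x trivial) analyticAt_const) i
  exact (dense_setOf_ne_zero_of_analytic (fun x _ => analyticAt_det (hentry x))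
    (mem_RegPts_iff.1 hx₀)).mono fun x hx => mem_RegPts_iff.2 hx

theorem mem_RegPts_unpackTriple_iff {g : (Fin n → ℝ) → JetSpace (Fin n)} {x : Fin n → ℝ}
    (hg : DifferentiableAt ℝ g x) {S : Matrix (Fin n ⊕ Fin n) (Fin n) ℝ}
    (hS : ∀ v, fderiv ℝ g x v = contactLift (g x) (S *ᵥ v)) :
    (x ∈ RegPts n (unpackTriple g).1 ↔ S.toRows₁.det ≠ 0) ∧
      (x ∈ RegPts n (unpackTriple g).2.2 ↔ S.toRows₂.det ≠ 0) := by
  refine ⟨mem_RegPts_iff_of_fderiv_eq fun v => ?_, mem_RegPts_iff_of_fderiv_eq fun v => ?_⟩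
  · exact (congrArg (· v) hg.hasFDerivAt.fst.fderiv).trans (congrArg Prod.fst (hS v))
  · exact (congrArg (· v) hg.hasFDerivAt.snd.snd.fderiv).trans
      (congrArg (fun u => u.2.2) (hS v))

theorem unpackTriple_mem_GXset_of_analytic {g : (Fin n → ℝ) → JetSpace (Fin n)}
    (hg : AnalyticOnNhd ℝ g Set.univ) (hL : IsLegendrian g) {x₀ : Fin n → ℝ}
    {S : Matrix (Fin n ⊕ Fin n) (Fin n) ℝ} (hS : IsTransverse S)
    (hx₀ : ∀ v, fderiv ℝ g x₀ v = contactLift (g x₀) (S *ᵥ v)) : unpackTriple g ∈ GXset n := by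
  have hgd : Differentiable ℝ g := fun x => (hg x trivial).differentiableAt
  obtain ⟨hθ, hb⟩ := mem_RegPts_unpackTriple_iff (hgd x₀) hx₀
  exact ⟨smoothTriple_unpackTriple hg.contDiff, (creative_unpackTriple_iff hgd).2 hL,
    dense_RegPts_of_analytic (fun x _ => analyticAt_fst.comp (hg x trivial)) (hθ.2 hS.1),
    dense_RegPts_of_analytic (fun x _ => analyticAt_snd.comp (analyticAt_snd.comp (hg x trivial)))
      (hb.2 hS.2)⟩

theorem quadraticLegendrian_mem_GXset (p : JetSpace (Fin n))
    {S : Matrix (Fin n ⊕ Fin n) (Fin n) ℝ} (hS : IsIsotropic S) (hS' : IsTransverse S) :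
    unpackTriple (quadraticLegendrian p S) ∈ GXset n :=
  unpackTriple_mem_GXset_of_analytic (analyticOnNhd_quadraticLegendrian p S)
    (isLegendrian_quadraticLegendrian p hS) hS' (fderiv_quadraticLegendrian p hS 0)

theorem isTransverse_of_quadraticLegendrian_mem_GXset {p : JetSpace (Fin n)}
    {S : Matrix (Fin n ⊕ Fin n) (Fin n) ℝ} (hS : IsIsotropic S)
    (h : unpackTriple (quadraticLegendrian p S) ∈ GXset n) : IsTransverse S := by
  have hreg (x) := mem_RegPts_unpackTriple_iff (differentiable_quadraticLegendrian p S x)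
    (fderiv_quadraticLegendrian p hS x)
  obtain ⟨x, hx⟩ := h.2.2.1.nonempty
  obtain ⟨y, hy⟩ := h.2.2.2.nonempty
  exact ⟨(hreg x).1.1 hx, (hreg y).2.1 hy⟩

theorem isIsotropic_fromRows_one_smul (c : ℝ) :
    IsIsotropic (fromRows 1 (c • 1) : Matrix (Fin n ⊕ Fin n) (Fin n) ℝ) :=
  isIsotropic_fromRows_iff.2 (by simp)

theorem quadraticLegendrian_fromRows_one_smul_mem_GXset (p : JetSpace (Fin n)) {c : ℝ}
    (hc : c ≠ 0) : unpackTriple (quadraticLegendrian p (fromRows 1 (c • 1))) ∈ GXset n :=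
  quadraticLegendrian_mem_GXset p (isIsotropic_fromRows_one_smul c) (by simp [IsTransverse, hc])

theorem unpackTriple_paraboloidJet_mem_GXset :
    unpackTriple (paraboloidJet : (Fin n → ℝ) → JetSpace (Fin n)) ∈ GXset n := by
  rw [← quadraticLegendrian_zero_fromRows_one_one]
  simpa using quadraticLegendrian_fromRows_one_smul_mem_GXset (n := n) 0 one_ne_zero

theorem unpackTriple_paraboloidJet_mem_GYset :
    unpackTriple (paraboloidJet : (Fin n → ℝ) → JetSpace (Fin n)) ∈ GYset n :=
  ⟨id, contDiff_id, unpackTriple_paraboloidJet_mem_GXset.2.2.1, by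
    simp [unpackTriple, paraboloidJet, dotProduct, sq]; rfl⟩

theorem exists_mem_GXset_notMem_GYset (hn : 1 ≤ n) : ∃ Φ ∈ GXset n, Φ ∉ GYset n := by
  refine ⟨_, quadraticLegendrian_fromRows_one_smul_mem_GXset 0 two_ne_zero, ?_⟩
  rintro ⟨θ, -, -, h⟩
  have hθb := (congrArg Prod.fst h).trans (congrArg (fun Φ => Φ.2.2) h).symm
  have h₁ := congrFun (congrFun hθb 1) ⟨0, hn⟩
  simp [unpackTriple, quadraticLegendrian, contactLift, reeb, fromRows_mulVec, smul_mulVec] at h₁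

end GenericMaps

section Transform

variable {n : ℕ} {F : JetSpace (Fin n) → JetSpace (Fin n)}

/-- Composition with `F` maps `GX` to itself. -/
def PreservesGX (F : JetSpace (Fin n) → JetSpace (Fin n)) : Prop :=
  ∀ g, unpackTriple g ∈ GXset n → unpackTriple (F ∘ g) ∈ GXset n

/- Every vector of a contact plane is a sum of vectors tangent to two transverse quadratic
Legendrian maps. -/
theorem PreservesGX.isContactMap (hGX : PreservesGX F) (hF : Differentiable ℝ F) :
    IsContactMap F := by
  intro p u hu
  have htangent {c : ℝ} (hc : c ≠ 0) (x : Fin n → ℝ) :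
      contactForm (F p) (fderiv ℝ F p (contactLift p (fromRows 1 (c • 1) *ᵥ x))) = 0 := by
    have hd := differentiable_quadraticLegendrian p (fromRows 1 (c • 1))
    have hL := (creative_unpackTriple_iff (hF.comp hd)).1
      (hGX _ (quadraticLegendrian_fromRows_one_smul_mem_GXset p hc)).2.1 0 x
    rw [fderiv_comp _ (hF _) (hd _)] at hL
    simpa [fderiv_quadraticLegendrian p (isIsotropic_fromRows_one_smul c)] using hL
  have hsplit : contactCoords u = fromRows 1 ((1 : ℝ) • 1) *ᵥ (2 • u.1 - u.2.2) +
      fromRows 1 ((2 : ℝ) • 1) *ᵥ (u.2.2 - u.1) := by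
    ext (i | i)
    · simp [contactCoords, fromRows_mulVec]
      ring
    · simp [contactCoords, fromRows_mulVec, smul_mulVec]
      ring
  rw [← contactLift_contactCoords hu, hsplit, map_add, map_add, map_add,
    htangent one_ne_zero, htangent two_ne_zero, add_zero]

theorem PreservesGX.reflectsTransverse (hGX : PreservesGX F) (hF : AnalyticOnNhd ℝ F Set.univ)
    (hinv : Function.Involutive F) (p : JetSpace (Fin n)) :
    ReflectsTransverse (contactJacobian F p) := by
  intro S hS hFS
  have hFd : Differentiable ℝ F := fun q => (hF q trivial).differentiableAt
  have hd := differentiable_quadraticLegendrian p S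
  have hcontact := hGX.isContactMap hFd
  have hmem : unpackTriple (F ∘ quadraticLegendrian p S) ∈ GXset n := by
    refine unpackTriple_mem_GXset_of_analytic (x₀ := 0)
      (hF.comp (analyticOnNhd_quadraticLegendrian p S) (Set.mapsTo_univ _ _))
      (hcontact.isLegendrian_comp (isLegendrian_quadraticLegendrian p hS) hFd hd) hFS fun v => ?_
    rw [fderiv_comp _ (hFd _) (hd _), ContinuousLinearMap.comp_apply,
      fderiv_quadraticLegendrian p hS, quadraticLegendrian_apply_zero, hcontact.fderiv_contactLift,
      mulVec_mulVec, Function.comp_apply, quadraticLegendrian_apply_zero]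
  refine isTransverse_of_quadraticLegendrian_mem_GXset (p := p) hS ?_
  simpa only [← Function.comp_assoc, hinv.comp_self, Function.id_comp] using hGX _ hmem

theorem isRigidContactInvolution_of_transform {T : TripleMap n → TripleMap n}
    (hmap : ∀ Φ ∈ GXset n, T Φ ∈ GXset n) (hinv : ∀ Φ ∈ GXset n, T (T Φ) = Φ)
    (hfix : ∀ Φ ∈ GXset n, Φ ∈ GYset n → T Φ = Φ) (hF : AnalyticOnNhd ℝ F Set.univ)
    (hTF : ∀ Φ ∈ GXset n, packTriple n (T Φ) = F ∘ packTriple n Φ) :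
    IsRigidContactInvolution F := by
  have hGX : PreservesGX F := fun g hg => (congrArg unpackTriple (hTF _ hg)) ▸ hmap _ hg
  have hinvolutive : Function.Involutive F := fun p => by
    have hmem := quadraticLegendrian_fromRows_one_smul_mem_GXset p one_ne_zero
    have h := hTF _ (hmap _ hmem)
    rw [hinv _ hmem, hTF _ hmem] at h
    have h₀ := congrFun h 0
    simpa [packTriple, unpackTriple] using h₀.symm
  refine ⟨hF, hinvolutive, hGX.isContactMap fun p => (hF p trivial).differentiableAt,
    hGX.reflectsTransverse hF hinvolutive, fun x => ?_⟩
  have h := hTF _ unpackTriple_paraboloidJet_mem_GXset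
  rw [hfix _ unpackTriple_paraboloidJet_mem_GXset unpackTriple_paraboloidJet_mem_GYset] at h
  exact (congrFun h x).symm

theorem legendre_involution_characterization_general (hn : 1 ≤ n)
    (T : TripleMap n → TripleMap n)
    (hmap : ∀ Φ ∈ GXset n, T Φ ∈ GXset n)
    (hinv : ∀ Φ ∈ GXset n, T (T Φ) = Φ)
    (hfix : ∀ Φ ∈ GXset n, Φ ∈ GYset n → T Φ = Φ)
    (hne : ∃ Φ ∈ GXset n, T Φ ≠ Φ)
    (hF : AnalyticOnNhd ℝ F Set.univ)
    (hTF : ∀ Φ ∈ GXset n, packTriple n (T Φ) = F ∘ packTriple n Φ) :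
    ∀ Φ ∈ GXset n, T Φ = Legendre n Φ := by
  intro Φ hΦ
  have : Nonempty (Fin n) := ⟨0, hn⟩
  have hrigid := isRigidContactInvolution_of_transform hmap hinv hfix hF hTF
  obtain rfl | rfl := hrigid.eq_id_or_eq_legendreMap
  · obtain ⟨Ψ, hΨ, hTΨ⟩ := hne
    exact absurd (congrArg unpackTriple (hTF Ψ hΨ)) hTΨ
  · exact congrArg unpackTriple (hTF Φ hΦ)

end Transform

/-- **Theorem 2**: a transform of `GX` which is an involution, whose fixed point set is
exactly `GY`, and which is induced by a real-analytic map `F : ℝ^{2n+1} → ℝ^{2n+1}`,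
must be the Legendre involution. -/
theorem legendre_involution_characterization (n : ℕ) (hn : 1 ≤ n)
    (T : TripleMap n → TripleMap n)
    (hmap : ∀ Φ ∈ GXset n, T Φ ∈ GXset n)
    (hinv : ∀ Φ ∈ GXset n, T (T Φ) = Φ)
    (hfix : ∀ Φ ∈ GXset n, (Φ ∈ GYset n → T Φ = Φ) ∧ (Φ ∉ GYset n → T Φ ≠ Φ))
    (F : (Fin n → ℝ) × ℝ × (Fin n → ℝ) → (Fin n → ℝ) × ℝ × (Fin n → ℝ))
    (hF : AnalyticOnNhd ℝ F Set.univ)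
    (hTF : ∀ Φ ∈ GXset n, packTriple n (T Φ) = F ∘ packTriple n Φ) :
    ∀ Φ ∈ GXset n, T Φ = Legendre n Φ := by
  obtain ⟨Ψ, hΨ, hΨY⟩ := exists_mem_GXset_notMem_GYset hn
  exact legendre_involution_characterization_general hn T hmap hinv (fun Φ hΦ => (hfix Φ hΦ).1)
    ⟨Ψ, hΨ, (hfix Ψ hΨ).2 hΨY⟩ hF hTF
end

section
/- Let n ≥ 1, let t = (t₁, …, tₙ) ∈ ℝⁿ, and let Φ = (θ, a, b) : ℝⁿ → ℝ^{2n+1} be smooth and satisfy the creative condition da = Σᵢ bᵢ dθᵢ. Define θ̃ᵢ = (tᵢ − 1)θᵢ + (2 − tᵢ)bᵢ, b̃ᵢ = tᵢθᵢ + (1 − tᵢ)bᵢ, and ã = Σᵢ₌₁ⁿ [ (tᵢ(tᵢ − 1)/2)·θᵢ² + tᵢ(2 − tᵢ)·θᵢbᵢ + ((1 − tᵢ)(2 − tᵢ)/2)·bᵢ² ] − a. Then (θ̃, ã, b̃) satisfies the creative condition: dã = Σᵢ₌₁ⁿ b̃ᵢ dθ̃ᵢ. -/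
open scoped BigOperators

/-!
A linear substitution `θ̃ = αθ + βb`, `b̃ = γθ + δb` in a plane rescales the area form by its
determinant `κ = αδ - βγ`, so `b̃ dθ̃ - κ b dθ` is closed, with the explicit quadratic primitive
`(γα/2) θ² + γβ θb + (δβ/2) b²`. If all the planes share the same `κ`, summing the primitives and
adding `κ a` turns `da = ∑ᵢ bᵢ dθᵢ` into `dã = ∑ᵢ b̃ᵢ dθ̃ᵢ`. The substitution with rows
`(t - 1, 2 - t)` and `(t, 1 - t)` has determinant `-1` for every `t`.
-/

section LinearSubstitution

variable {𝕜 E ι : Type*} [NontriviallyNormedField 𝕜] [NormedAddCommGroup E] [NormedSpace 𝕜 E]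
  {x : E}

theorem hasFDerivAt_quadratic_primitive [NeZero (2 : 𝕜)] {p q : E → 𝕜} {p' q' : E →L[𝕜] 𝕜}
    (hp : HasFDerivAt p p' x) (hq : HasFDerivAt q q' x) (α β γ δ : 𝕜) :
    HasFDerivAt
      (fun y => γ * α / 2 * p y ^ 2 + γ * β * (p y * q y) + δ * β / 2 * q y ^ 2)
      ((γ * p x + δ * q x) • (α • p' + β • q') - (α * δ - β * γ) • q x • p') x := by
  have hpp := (hp.pow 2).const_mul (γ * α / 2)
  have hpq := (hp.fun_mul hq).const_mul (γ * β)
  have hqq := (hq.pow 2).const_mul (δ * β / 2)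
  refine ((hpp.fun_add hpq).fun_add hqq).congr_fderiv ?_
  ext v
  simp only [pow_one, nsmul_eq_mul, Nat.cast_ofNat, Nat.add_one_sub_one, add_apply, sub_apply,
    smul_apply, smul_eq_mul]
  field_simp
  ring

variable [Fintype ι]

/-- The creative condition `da = ∑ᵢ bᵢ dθᵢ` at the point `x`, tested on tangent vectors. It is
phrased with `fderiv`, so it is meaningful only where `θ` and `a` are differentiable. -/
def CreativeConditionAt (θ : E → ι → 𝕜) (a : E → 𝕜) (b : E → ι → 𝕜) (x : E) : Prop :=
  ∀ v : E, fderiv 𝕜 a x v = ∑ i, b x i * fderiv 𝕜 (fun y => θ y i) x v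

theorem creative_condition_of_transformed_triple_general [NeZero (2 : 𝕜)]
    {α β γ δ : ι → 𝕜} {κ : 𝕜} (hdet : ∀ i, α i * δ i - β i * γ i = κ)
    {θ b : E → ι → 𝕜} {a : E → 𝕜} (hθ : DifferentiableAt 𝕜 θ x) (ha : DifferentiableAt 𝕜 a x)
    (hb : DifferentiableAt 𝕜 b x) (hcr : CreativeConditionAt θ a b x) :
    CreativeConditionAt
      (fun y i => α i * θ y i + β i * b y i)
      (fun y => (∑ i, (γ i * α i / 2 * θ y i ^ 2 + γ i * β i * (θ y i * b y i)
        + δ i * β i / 2 * b y i ^ 2)) + κ * a y)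
      (fun y i => γ i * θ y i + δ i * b y i) x := by
  intro v
  have hθ' i := (differentiableAt_pi.1 hθ i).hasFDerivAt
  have hb' i := (differentiableAt_pi.1 hb i).hasFDerivAt
  have h_primitive := HasFDerivAt.fun_sum (u := Finset.univ) fun i _ =>
    hasFDerivAt_quadratic_primitive (hθ' i) (hb' i) (α i) (β i) (γ i) (δ i)
  have h_potential := h_primitive.fun_add (ha.hasFDerivAt.const_mul κ)
  have h_angle i := ((hθ' i).const_mul (α i)).fun_add ((hb' i).const_mul (β i))
  simp only [h_potential.fderiv, (h_angle _).fderiv, hdet, hcr v, add_apply, sum_apply, sub_apply,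
    smul_apply, smul_eq_mul, Finset.sum_sub_distrib, Finset.mul_sum, sub_add_cancel]

end LinearSubstitution

/-- CASE II computation in the proof of Theorem 2: if `(θ, a, b)` satisfies the
creative condition `da = ∑ᵢ bᵢ dθᵢ`, then for any parameters `t₁, …, tₙ` the triple
`(θ̃, ã, b̃)` with `θ̃ᵢ = (tᵢ−1)θᵢ + (2−tᵢ)bᵢ`, `b̃ᵢ = tᵢθᵢ + (1−tᵢ)bᵢ` and
`ã = ∑ᵢ [ (tᵢ(tᵢ−1)/2)θᵢ² + tᵢ(2−tᵢ)θᵢbᵢ + ((1−tᵢ)(2−tᵢ)/2)bᵢ² ] − a`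
also satisfies the creative condition `dã = ∑ᵢ b̃ᵢ dθ̃ᵢ`. -/
theorem creative_condition_of_transformed_triple (n : ℕ) (hn : 1 ≤ n) (t : Fin n → ℝ)
    (θ b : (Fin n → ℝ) → Fin n → ℝ) (a : (Fin n → ℝ) → ℝ)
    (hθ : ContDiff ℝ (⊤ : ℕ∞) θ) (ha : ContDiff ℝ (⊤ : ℕ∞) a) (hb : ContDiff ℝ (⊤ : ℕ∞) b)
    (hcr : ∀ x v : Fin n → ℝ,
      fderiv ℝ a x v = ∑ i, b x i * fderiv ℝ (fun y => θ y i) x v) :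
    ∀ x v : Fin n → ℝ,
      fderiv ℝ (fun y =>
          (∑ i, ((t i * (t i - 1) / 2) * θ y i ^ 2
            + t i * (2 - t i) * (θ y i * b y i)
            + ((1 - t i) * (2 - t i) / 2) * b y i ^ 2)) - a y) x v
        = ∑ i, (t i * θ x i + (1 - t i) * b x i) *
            fderiv ℝ (fun y => (t i - 1) * θ y i + (2 - t i) * b y i) x v := by
  intro x v
  simpa only [neg_one_mul, ← sub_eq_add_neg] using
    creative_condition_of_transformed_triple_general
      (α := fun i => t i - 1) (β := fun i => 2 - t i) (γ := t) (δ := fun i => 1 - t i)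
      (κ := -1) (fun i => by ring) (hθ.differentiable (by simp) x) (ha.differentiable (by simp) x)
      (hb.differentiable (by simp) x) (hcr x) v
end
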